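/- Let E and F be Dedekind complete vector lattices and let T : E → F be a dominated linear operator, i.e. there exists a positive linear operator S : E → F with |Tx| ≤ S(|x|) for all x ∈ E. Then T has an exact (least) dominant ⟦T⟧: a positive linear operator ⟦T⟧ : E → F with |Tx| ≤ ⟦T⟧(|x|) for all x, such that ⟦T⟧ ≤ S' for every positive linear operator S' with |Tx| ≤ S'(|x|) for all x. Moreover, for every e ∈ E with e ≥ 0, ⟦T⟧(e) is the least upper bound in F of the set of all finite sums Σᵢ₌₁ⁿ |Tvᵢ| taken over all finite families v₁, …, vₙ ∈ E such that |v₁|, …, |vₙ| are pairwise disjoint and Σᵢ₌₁ⁿ |vᵢ| = e. -/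

import Mathlib

section Aux

variable {E F : Type*}

/-- Disjoint elements: the sum is the supremum. -/
theorem aux_add_eq_sup [Lattice E] [AddCommGroup E] [IsOrderedAddMonoid E] {a b : E}
    (h : a ⊓ b = 0) : a + b = a ⊔ b := by
  have := inf_add_sup a b
  rw [h, zero_add] at this
  exact this.symm

theorem aux_inf_nsmul [Lattice E] [AddCommGroup E] [IsOrderedAddMonoid E] {q x : E}
    (hq : 0 ≤ q) (hx : 0 ≤ x) (h : q ⊓ x = 0) (m : ℕ) : q ⊓ (m • x) = 0 := by
  induction m with
  | zero => simpa using hq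
  | succ m ih =>
    apply le_antisymm _ (le_inf hq (nsmul_nonneg hx _))
    rw [← ih]
    refine le_inf inf_le_left ?_
    have hmx : 0 ≤ m • x := nsmul_nonneg hx m
    have h1 : q ⊓ ((m + 1) • x) - m • x ≤ q ⊓ x := by
      refine le_inf ?_ ?_
      · exact (sub_le_self _ hmx).trans inf_le_left
      · rw [sub_le_iff_le_add, ← succ_nsmul']
        exact inf_le_right
    rw [h] at h1
    exact sub_nonpos.mp h1

/-- The supremum of elements disjoint from `y` is disjoint from `y`. -/
theorem aux_lub_disj [Lattice E] [AddCommGroup E] [IsOrderedAddMonoid E] {A : Set E} {p y : E}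
    (hA : IsLUB A p) (hA0 : ∀ a ∈ A, 0 ≤ a) (hp : 0 ≤ p) (hy : 0 ≤ y)
    (h : ∀ a ∈ A, a ⊓ y = 0) : p ⊓ y = 0 := by
  have hz : 0 ≤ p ⊓ y := le_inf hp hy
  apply le_antisymm _ hz
  have : p ≤ p - p ⊓ y := by
    apply hA.2
    intro a ha
    have h0 : a ⊓ (p ⊓ y) = 0 := by
      apply le_antisymm _ (le_inf (hA0 a ha) hz)
      rw [← h a ha]
      exact inf_le_inf_left _ inf_le_right
    rw [le_sub_iff_add_le, aux_add_eq_sup h0]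
    exact sup_le (hA.1 ha) inf_le_left
  simpa using this

/-- One greedy step of the Freudenthal-type approximation. -/
theorem aux_step [Lattice E] [AddCommGroup E] [IsOrderedAddMonoid E]
    (hDed : ∀ S : Set E, S.Nonempty → BddAbove S → ∃ a : E, IsLUB S a)
    {e w : E} (he : 0 ≤ e) (hw : 0 ≤ w) (n : ℕ) (hwn : w ≤ (n + 2) • e) :
    ∃ P : E, 0 ≤ P ∧ P ≤ e ∧ P ⊓ (e - P) = 0 ∧ 0 ≤ w - P ∧ w - P ≤ (n + 1) • e := by
  set x := (w - e)⁺ with hxd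
  set y := (w - e)⁻ with hyd
  have hx : 0 ≤ x := posPart_nonneg _
  have hy : 0 ≤ y := negPart_nonneg _
  have hxy : x ⊓ y = 0 := posPart_inf_negPart_eq_zero _
  have hwe : x - y = w - e := posPart_sub_negPart _
  set A : Set E := Set.range (fun m : ℕ => e ⊓ (m • x)) with hAd
  obtain ⟨P, hP⟩ := hDed A ⟨_, ⟨0, rfl⟩⟩ ⟨e, by rintro _ ⟨m, rfl⟩; exact inf_le_left⟩
  have hA0 : ∀ a ∈ A, 0 ≤ a := by
    rintro _ ⟨m, rfl⟩; exact le_inf he (nsmul_nonneg hx _)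
  have hP0 : 0 ≤ P := (hA0 _ ⟨0, rfl⟩).trans (hP.1 ⟨0, rfl⟩)
  have hPe : P ≤ e := hP.2 (by rintro _ ⟨m, rfl⟩; exact inf_le_left)
  have hQ : 0 ≤ e - P := sub_nonneg.mpr hPe
  have hPy : P ⊓ y = 0 := by
    apply aux_lub_disj hP hA0 hP0 hy
    rintro _ ⟨m, rfl⟩
    apply le_antisymm _ (le_inf (hA0 _ ⟨m, rfl⟩) hy)
    rw [← aux_inf_nsmul hy hx (by rw [inf_comm]; exact hxy) m]
    exact le_inf inf_le_right (inf_le_left.trans inf_le_right)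
  have hQx : (e - P) ⊓ x = 0 := by
    apply le_antisymm _ (le_inf hQ hx)
    have : P ≤ P - (e - P) ⊓ x := by
      apply hP.2
      rintro _ ⟨m, rfl⟩
      rw [le_sub_iff_add_le]
      refine le_trans ?_ (hP.1 ⟨m + 1, rfl⟩)
      refine le_inf ?_ ?_
      · calc e ⊓ m • x + (e - P) ⊓ x ≤ P + (e - P) :=
              add_le_add (hP.1 ⟨m, rfl⟩) inf_le_left
          _ = e := by abel
      · rw [succ_nsmul]
        exact add_le_add inf_le_right inf_le_right
    simpa using this
  refine ⟨P, hP0, hPe, ?_, ?_, ?_⟩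
  · apply aux_lub_disj hP hA0 hP0 hQ
    rintro _ ⟨m, rfl⟩
    apply le_antisymm _ (le_inf (hA0 _ ⟨m, rfl⟩) hQ)
    rw [← aux_inf_nsmul hQ hx hQx m]
    exact le_inf inf_le_right (inf_le_left.trans inf_le_right)
  · have hye : y ≤ e := by
      rw [hyd, negPart_def]
      exact sup_le (by simpa using hw) he
    have h1 : P + y ≤ e := by
      rw [aux_add_eq_sup hPy]; exact sup_le hPe hye
    have h2 : w - P = (e - (P + y)) + x := by
      have : w = x - y + e := by rw [hwe]; abel
      rw [this]; abel
    rw [h2]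
    exact add_nonneg (sub_nonneg.mpr h1) hx
  · have hne : 0 ≤ n • e := nsmul_nonneg he n
    have hxe : x ≤ (n + 1) • e := by
      rw [hxd, posPart_def]
      refine sup_le ?_ (nsmul_nonneg he _)
      rw [sub_le_iff_le_add, ← succ_nsmul]
      exact hwn
    have hQe : e - P ≤ (n + 1) • e := by
      rw [succ_nsmul]
      exact (sub_le_self _ hP0).trans (le_add_of_nonneg_left hne)
    have h2 : w - P = ((e - P) + x) - y := by
      have : w = x - y + e := by rw [hwe]; abel
      rw [this]; abel
    rw [h2, aux_add_eq_sup hQx]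
    exact (sub_le_self _ hy).trans (sup_le hQe hxe)

theorem aux_approx [Lattice E] [AddCommGroup E] [IsOrderedAddMonoid E]
    (hDed : ∀ S : Set E, S.Nonempty → BddAbove S → ∃ a : E, IsLUB S a)
    {e : E} (he : 0 ≤ e) (n : ℕ) : ∀ w : E, 0 ≤ w → w ≤ (n + 1) • e →
    ∃ P : Fin n → E, (∀ i, 0 ≤ P i ∧ P i ≤ e ∧ P i ⊓ (e - P i) = 0) ∧
      0 ≤ w - ∑ i, P i ∧ w - ∑ i, P i ≤ e := by
  induction n with
  | zero =>
    intro w hw hwe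
    exact ⟨fun _ => 0, fun i => i.elim0, by simpa using hw, by simpa using hwe⟩
  | succ n ih =>
    intro w hw hwe
    obtain ⟨P, h0, h1, h2, h3, h4⟩ := aux_step hDed he hw n hwe
    obtain ⟨Q, hQ, h5, h6⟩ := ih (w - P) h3 h4
    refine ⟨Fin.cons P Q, ?_, ?_, ?_⟩
    · intro i
      refine Fin.cases ?_ ?_ i
      · exact ⟨h0, h1, h2⟩
      · intro j; simpa using hQ j
    · rw [Fin.sum_univ_succ]; simpa [sub_sub] using h5
    · rw [Fin.sum_univ_succ]; simpa [sub_sub] using h6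

/-- Dedekind complete lattice-ordered groups are Archimedean. -/
theorem aux_arch [Lattice F] [AddCommGroup F] [IsOrderedAddMonoid F]
    (hDed : ∀ S : Set F, S.Nonempty → BddAbove S → ∃ a : F, IsLUB S a)
    {a c : F} (h : ∀ n : ℕ, (n + 1) • a ≤ c) : a ≤ 0 := by
  obtain ⟨s, hs⟩ := hDed (Set.range fun n : ℕ => (n + 1) • a) ⟨_, ⟨0, rfl⟩⟩
    ⟨c, by rintro _ ⟨n, rfl⟩; exact h n⟩
  have : s ≤ s - a := by
    apply hs.2
    rintro _ ⟨n, rfl⟩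
    rw [le_sub_iff_add_le]
    have := hs.1 ⟨n + 1, rfl⟩
    simpa only [succ_nsmul _ (n + 1)] using this
  simpa using this

/-- Extension of an additive, positively homogeneous map from the positive cone. -/
theorem aux_extend [Lattice E] [AddCommGroup E] [IsOrderedAddMonoid E] [Module ℝ E]
    [PosSMulMono ℝ E] [AddCommGroup F] [Module ℝ F] (R : E → F)
    (hadd : ∀ a b, 0 ≤ a → 0 ≤ b → R (a + b) = R a + R b)
    (hsmul : ∀ (c : ℝ) a, 0 ≤ c → 0 ≤ a → R (c • a) = c • R a) :
    ∃ L : E →ₗ[ℝ] F, ∀ a, 0 ≤ a → L a = R a := by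
  have key : ∀ x a b : E, 0 ≤ a → 0 ≤ b → x = a - b → R x⁺ - R x⁻ = R a - R b := by
    intro x a b ha hb h
    have hx := posPart_sub_negPart x
    have h1 : x⁺ + b = a + x⁻ := by
      rw [← sub_eq_zero]
      have : x⁺ + b - (a + x⁻) = (x⁺ - x⁻) - (a - b) := by abel
      rw [this, hx, ← h, sub_self]
    have h2 := congrArg R h1
    rw [hadd _ _ (posPart_nonneg _) hb, hadd _ _ ha (negPart_nonneg _)] at h2
    rw [sub_eq_sub_iff_add_eq_add]
    exact h2
  refine ⟨{ toFun := fun x => R x⁺ - R x⁻, map_add' := ?_, map_smul' := ?_ }, ?_⟩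
  · intro x y
    rw [key (x + y) (x⁺ + y⁺) (x⁻ + y⁻) (add_nonneg (posPart_nonneg _) (posPart_nonneg _))
      (add_nonneg (negPart_nonneg _) (negPart_nonneg _)) ?_]
    · rw [hadd _ _ (posPart_nonneg _) (posPart_nonneg _),
        hadd _ _ (negPart_nonneg _) (negPart_nonneg _)]
      abel
    · conv_lhs => rw [← posPart_sub_negPart x, ← posPart_sub_negPart y]
      abel
  · intro c x
    simp only [RingHom.id_apply]
    rcases le_total 0 c with hc | hc
    · rw [key (c • x) (c • x⁺) (c • x⁻) (smul_nonneg hc (posPart_nonneg _))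
        (smul_nonneg hc (negPart_nonneg _)) ?_]
      · rw [hsmul _ _ hc (posPart_nonneg _), hsmul _ _ hc (negPart_nonneg _), smul_sub]
      · rw [← smul_sub, posPart_sub_negPart]
    · have hc' : 0 ≤ -c := neg_nonneg.mpr hc
      rw [key (c • x) ((-c) • x⁻) ((-c) • x⁺) (smul_nonneg hc' (negPart_nonneg _))
        (smul_nonneg hc' (posPart_nonneg _)) ?_]
      · rw [hsmul _ _ hc' (posPart_nonneg _), hsmul _ _ hc' (negPart_nonneg _)]
        module
      · conv_lhs => rw [← posPart_sub_negPart x]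
        module
  · intro a ha
    have h0 : R 0 = 0 := by simpa using hsmul 0 0 le_rfl le_rfl
    have := key a a 0 ha le_rfl (by simp)
    simpa [h0] using this

/-- Riesz–Kantorovich: the positive part of a dominated operator. -/
theorem aux_riesz [Lattice E] [AddCommGroup E] [IsOrderedAddMonoid E] [Module ℝ E]
    [PosSMulMono ℝ E] [Lattice F] [AddCommGroup F] [IsOrderedAddMonoid F] [Module ℝ F]
    [PosSMulMono ℝ F]
    (hDed : ∀ S : Set F, S.Nonempty → BddAbove S → ∃ a : F, IsLUB S a)
    (T : E →ₗ[ℝ] F)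
    (hbd : ∀ e : E, 0 ≤ e → BddAbove (Set.image T (Set.Icc 0 e))) :
    ∃ L : E →ₗ[ℝ] F, ∀ e, 0 ≤ e → IsLUB (Set.image T (Set.Icc 0 e)) (L e) := by
  have hex : ∀ e : E, ∃ r : F, 0 ≤ e → IsLUB (Set.image T (Set.Icc 0 e)) r := by
    intro e
    by_cases he : 0 ≤ e
    · obtain ⟨r, hr⟩ := hDed (Set.image T (Set.Icc 0 e)) ⟨T 0, 0, ⟨le_rfl, he⟩, rfl⟩ (hbd e he)
      exact ⟨r, fun _ => hr⟩
    · exact ⟨0, fun h => absurd h he⟩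
  choose R hR using hex
  have hle : ∀ e u, 0 ≤ u → u ≤ e → T u ≤ R e := fun e u h0 h1 =>
    (hR e (h0.trans h1)).1 ⟨u, ⟨h0, h1⟩, rfl⟩
  have hleast : ∀ e, 0 ≤ e → ∀ b, (∀ u, 0 ≤ u → u ≤ e → T u ≤ b) → R e ≤ b := by
    intro e he b hb
    apply (hR e he).2
    rintro _ ⟨u, hu, rfl⟩
    exact hb u hu.1 hu.2
  have hscale : ∀ (c : ℝ) a, 0 < c → 0 ≤ a → R (c • a) ≤ c • R a := by
    intro c a hc ha
    apply hleast _ (smul_nonneg hc.le ha)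
    intro u hu0 hu
    have h1 : T (c⁻¹ • u) ≤ R a := by
      apply hle _ _ (smul_nonneg (inv_nonneg.mpr hc.le) hu0)
      have := smul_le_smul_of_nonneg_left hu (inv_nonneg.mpr hc.le)
      rwa [inv_smul_smul₀ hc.ne'] at this
    have h2 := smul_le_smul_of_nonneg_left h1 hc.le
    rwa [map_smul, smul_inv_smul₀ hc.ne'] at h2
  obtain ⟨L, hL⟩ := aux_extend R (by
    intro a b ha hb
    apply le_antisymm
    · apply hleast _ (add_nonneg ha hb)
      intro u hu0 hu
      have h1 : T u = T (u ⊓ a) + T (u - u ⊓ a) := by rw [← map_add]; congr 1; abel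
      rw [h1]
      refine add_le_add (hle _ _ (le_inf hu0 ha) inf_le_right)
        (hle _ _ (sub_nonneg.mpr inf_le_left) ?_)
      rw [sub_le_iff_le_add, add_inf]
      exact le_inf (le_add_of_nonneg_left hb) (by rwa [add_comm])
    · have h1 : R a ≤ R (a + b) - R b := by
        apply hleast _ ha
        intro u hu0 hu
        rw [le_sub_comm]
        apply hleast _ hb
        intro v hv0 hv
        rw [le_sub_iff_add_le, ← map_add, add_comm v u]
        exact hle _ _ (add_nonneg hu0 hv0) (add_le_add hu hv)
      exact le_sub_iff_add_le.mp h1) (by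
    intro c a hc ha
    rcases hc.eq_or_lt with rfl | hc
    · simp only [zero_smul]
      apply le_antisymm
      · apply hleast _ le_rfl
        intro u hu0 hu
        rw [le_antisymm hu hu0, map_zero]
      · simpa using hle 0 0 le_rfl le_rfl
    · apply le_antisymm (hscale c a hc ha)
      have h := hscale c⁻¹ (c • a) (inv_pos.mpr hc) (smul_nonneg hc.le ha)
      rw [inv_smul_smul₀ hc.ne'] at h
      have h2 := smul_le_smul_of_nonneg_left h hc.le
      rwa [smul_inv_smul₀ hc.ne'] at h2)
  exact ⟨L, fun e he => by rw [hL e he]; exact hR e he⟩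

end Aux


set_option maxHeartbeats 1000000 in
/-- Let `E`, `F` be Dedekind complete vector lattices and `T : E → F` a dominated
linear operator.  Then `T` has an exact (least) dominant `⟦T⟧`, and for every
`0 ≤ e` the value `⟦T⟧ e` is the least upper bound of all sums `∑ |T vᵢ|` over the
finite families `v₁, …, vₙ` with pairwise disjoint moduli summing to `e`. -/
theorem exists_exact_dominant
    {E F : Type*}
    [Lattice E] [AddCommGroup E] [Module ℝ E]
    [CovariantClass E E (· + ·) (· ≤ ·)] [PosSMulMono ℝ E]
    [Lattice F] [AddCommGroup F] [Module ℝ F]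
    [CovariantClass F F (· + ·) (· ≤ ·)] [PosSMulMono ℝ F]
    (hDedE : ∀ S : Set E, S.Nonempty → BddAbove S → ∃ a : E, IsLUB S a)
    (hDedF : ∀ S : Set F, S.Nonempty → BddAbove S → ∃ a : F, IsLUB S a)
    (T : E →ₗ[ℝ] F)
    (hdom : ∃ S : E →ₗ[ℝ] F, (∀ x : E, 0 ≤ x → 0 ≤ S x) ∧ ∀ x : E, |T x| ≤ S (|x|)) :
    ∃ TT : E →ₗ[ℝ] F,
      (∀ x : E, 0 ≤ x → 0 ≤ TT x) ∧
      (∀ x : E, |T x| ≤ TT (|x|)) ∧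
      (∀ S' : E →ₗ[ℝ] F, (∀ x : E, 0 ≤ x → 0 ≤ S' x) → (∀ x : E, |T x| ≤ S' (|x|)) →
        ∀ e : E, 0 ≤ e → TT e ≤ S' e) ∧
      (∀ e : E, 0 ≤ e →
        IsLUB {s : F | ∃ (n : ℕ) (v : Fin n → E),
          (∀ i j : Fin n, i ≠ j → |v i| ⊓ |v j| = 0) ∧
          (∑ i, |v i|) = e ∧ s = ∑ i, |T (v i)|} (TT e)) := by
  have : IsOrderedAddMonoid E :=
    { add_le_add_left := fun a b h c => by
        rw [add_comm a c, add_comm b c]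
        exact CovariantClass.elim (μ := ((· + ·) : E → E → E)) c h }
  have : IsOrderedAddMonoid F :=
    { add_le_add_left := fun a b h c => by
        rw [add_comm a c, add_comm b c]
        exact CovariantClass.elim (μ := ((· + ·) : F → F → F)) c h }
  obtain ⟨S, hS0, hS⟩ := hdom
  have hTS : ∀ u e : E, 0 ≤ u → u ≤ e → T u ≤ S e := by
    intro u e hu hue
    have h1 : T u ≤ S u := by
      have := (le_abs_self (T u)).trans (hS u)
      rwa [abs_of_nonneg hu] at this
    have h2 := hS0 (e - u) (sub_nonneg.mpr hue)
    rw [map_sub, sub_nonneg] at h2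
    exact h1.trans h2
  obtain ⟨L, hL⟩ := aux_riesz hDedF T (by
    intro e he
    refine ⟨S e, ?_⟩
    rintro _ ⟨u, hu, rfl⟩
    exact hTS u e hu.1 hu.2)
  have hle : ∀ e u, 0 ≤ u → u ≤ e → T u ≤ L e := fun e u h0 h1 =>
    (hL e (h0.trans h1)).1 ⟨u, ⟨h0, h1⟩, rfl⟩
  -- upper bounds for `2 L - T`
  have hub : ∀ e, 0 ≤ e → ∀ b : F, (∀ u, 0 ≤ u → u ≤ e → T u ≤ (1 / 2 : ℝ) • (b + T e)) →
      L e + L e - T e ≤ b := by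
    intro e he b hb
    have h1 : L e ≤ (1 / 2 : ℝ) • (b + T e) := by
      apply (hL e he).2
      rintro _ ⟨u, hu, rfl⟩
      exact hb u hu.1 hu.2
    have h2 := add_le_add h1 h1
    have h3 : (1 / 2 : ℝ) • (b + T e) + (1 / 2 : ℝ) • (b + T e) = b + T e := by module
    rw [h3] at h2
    exact sub_le_iff_le_add.mpr h2
  have hhalf : ∀ a b : F, a + a ≤ b → a ≤ (1 / 2 : ℝ) • b := by
    intro a b h
    have h1 := smul_le_smul_of_nonneg_left h (by norm_num : (0 : ℝ) ≤ 1 / 2)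
    have h2 : (1 / 2 : ℝ) • (a + a) = a := by module
    rwa [h2] at h1
  have hTTapp : ∀ e, (L + L - T) e = L e + L e - T e := fun e => rfl
  have hdomi : ∀ x : E, |T x| ≤ (L + L - T) |x| := by
    intro x
    rw [hTTapp]
    have hp : x⁺ + x⁻ = |x| := posPart_add_negPart x
    have hm : x⁺ - x⁻ = x := posPart_sub_negPart x
    have h1 : x⁺ ≤ |x| := by rw [← hp]; exact le_add_of_nonneg_right (negPart_nonneg _)
    have h2 : x⁻ ≤ |x| := by rw [← hp]; exact le_add_of_nonneg_left (posPart_nonneg _)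
    have k1 := hle _ _ (posPart_nonneg x) h1
    have k2 := hle _ _ (negPart_nonneg x) h2
    have e1 : T |x| = T x⁺ + T x⁻ := by rw [← hp, map_add]
    have e2 : T x = T x⁺ - T x⁻ := by rw [← map_sub, hm]
    rw [abs_le', le_sub_iff_add_le, le_sub_iff_add_le]
    constructor
    · refine le_trans (le_of_eq ?_) (add_le_add k1 k1)
      rw [e1, e2]; abel
    · refine le_trans (le_of_eq ?_) (add_le_add k2 k2)
      rw [e1, e2]; abel
  refine ⟨L + L - T, ?_, hdomi, ?_, ?_⟩
  · intro x hx
    have h1 := hle x x hx le_rfl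
    have h2 := hle x 0 le_rfl hx
    rw [map_zero] at h2
    rw [hTTapp, add_sub_assoc]
    exact add_nonneg h2 (sub_nonneg.mpr h1)
  · intro S' _ hS' e he
    rw [hTTapp]
    apply hub e he
    intro u hu hue
    apply hhalf
    have h1 := (le_abs_self (T u)).trans (hS' u)
    have h2 := (neg_le_abs (T (e - u))).trans (hS' (e - u))
    rw [abs_of_nonneg hu] at h1
    rw [abs_of_nonneg (sub_nonneg.mpr hue)] at h2
    have h3 := add_le_add_left (add_le_add h1 h2) (T e)
    rw [← map_add S'] at h3
    rw [map_sub, add_sub_cancel] at h3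
    refine le_trans (le_of_eq ?_) h3
    abel
  · intro e he
    constructor
    · rintro _ ⟨n, v, _, hsum, rfl⟩
      rw [← hsum, map_sum]
      exact Finset.sum_le_sum fun i _ => hdomi (v i)
    · intro U hU
      rw [hTTapp]
      apply hub e he
      set b := (1 / 2 : ℝ) • (U + T e) with hb
      have hcomp : ∀ P : E, 0 ≤ P → P ≤ e → P ⊓ (e - P) = 0 → T P ≤ b := by
        intro P hP0 hPe hPd
        apply hhalf
        have hQ : 0 ≤ e - P := sub_nonneg.mpr hPe
        have h1 : |T P| + |T (e - P)| ≤ U := by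
          apply hU
          refine ⟨2, ![P, e - P], ?_, ?_, ?_⟩
          · intro i j hij
            fin_cases i <;> fin_cases j
            · exact absurd rfl hij
            · change |P| ⊓ |e - P| = 0
              rw [abs_of_nonneg hP0, abs_of_nonneg hQ, hPd]
            · change |e - P| ⊓ |P| = 0
              rw [abs_of_nonneg hP0, abs_of_nonneg hQ, inf_comm, hPd]
            · exact absurd rfl hij
          · simp [Fin.sum_univ_two, abs_of_nonneg hP0, abs_of_nonneg hQ]
          · simp [Fin.sum_univ_two]
        have h2 := (add_le_add (le_abs_self (T P)) (neg_le_abs (T (e - P)))).trans h1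
        have h3 := add_le_add_left h2 (T e)
        refine le_trans (le_of_eq ?_) h3
        rw [map_sub]; abel
      intro u hu hue
      rw [← sub_nonpos]
      apply aux_arch hDedF (c := S e - b)
      intro n
      obtain ⟨P, hP, hr0, hr1⟩ := aux_approx hDedE he n ((n + 1) • u) (nsmul_nonneg hu _)
        (nsmul_le_nsmul_right hue _)
      have h1 := hTS _ _ hr0 hr1
      have h2 : ∑ i, T (P i) ≤ n • b := by
        have := Finset.sum_le_sum (s := Finset.univ)
          fun i _ => hcomp (P i) (hP i).1 (hP i).2.1 (hP i).2.2
        simpa using this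
      rw [map_sub, map_nsmul, map_sum, sub_le_iff_le_add] at h1
      rw [nsmul_sub, succ_nsmul b, sub_le_iff_le_add]
      calc (n + 1) • T u ≤ S e + ∑ i, T (P i) := h1
        _ ≤ S e + n • b := add_le_add le_rfl h2
        _ = S e - b + (n • b + b) := by abel
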